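/- Let u : ℝ² → ℝ be a smooth, nowhere-vanishing function of (x,t) satisfying the mKdV equation u_t + u_xxx − 6u²u_x = 0. Let z : ℝ² → ℝ be smooth with z_x(x,t) = u(x,t) and z_t(x,t) = 2u(x,t)³ − u_xx(x,t) for all (x,t), and let U : ℝ² → ℝ be a smooth function of (z,τ) such that U(z(x,t), t) = u(x,t) for all (x,t). Then the RmKdV equation U_τ + (U³(U_zz − U))_z = 0 holds at every point of the form (z(x,t), t). -/

import Mathlib

noncomputable section

/-- Partial derivative of `f` with respect to its first argument. -/
def d1 (f : ℝ → ℝ → ℝ) : ℝ → ℝ → ℝ := fun a b => deriv (fun a' => f a' b) a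

/-- Partial derivative of `f` with respect to its second argument. -/
def d2 (f : ℝ → ℝ → ℝ) : ℝ → ℝ → ℝ := fun a b => deriv (fun b' => f a b') b

/-- Smoothness of a two-variable real function. -/
def Smooth2 (f : ℝ → ℝ → ℝ) : Prop := ContDiff ℝ (⊤ : ℕ∞) (fun p : ℝ × ℝ => f p.1 p.2)

/-! Substituting `u = U(z)` turns `z_x = u` into the autonomous equation `z_x = U(z)` at each fixed
time, so `∂_x` acts on functions of `z` as the derivation `U ∂_z`. With `p = (U U_z)_z`, this gives
`u_xx = U p` and `u_xxx = U (U p)_z`, while the chain rule gives `u_t = U_τ + U_z (2 U³ - u_xx)`.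
In the mKdV expression the terms `U U_z p` cancel, leaving `U_τ + U² p_z - 4 U³ U_z`, and
`U² (U U_z)_zz = (U³ U_zz)_z`. Hence the mKdV expression of `u` at `(x, t)` equals the RmKdV
expression of `U` at `(z(x, t), t)`. -/

open Function (uncurry)

section OneVariable

variable {𝕜 : Type*} [NontriviallyNormedField 𝕜] {f g ζ : 𝕜 → 𝕜}

theorem deriv_comp_of_hasDerivAt_comp (hζ : ∀ x, HasDerivAt ζ (g (ζ x)) x)
    (hf : Differentiable 𝕜 f) : deriv (f ∘ ζ) = (g * deriv f) ∘ ζ := by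
  ext x
  exact ((hf (ζ x)).hasDerivAt.comp x (hζ x)).deriv.trans (mul_comm _ _)

theorem contDiff_mul_deriv {n : WithTop ℕ∞} (hg : ContDiff 𝕜 n g) (hf : ContDiff 𝕜 (n + 1) f) :
    ContDiff 𝕜 n (g * deriv f) :=
  hg.mul hf.deriv'

theorem deriv_deriv_comp_of_hasDerivAt_comp (hζ : ∀ x, HasDerivAt ζ (g (ζ x)) x)
    (hg : ContDiff 𝕜 1 g) (hf : ContDiff 𝕜 2 f) :
    deriv (deriv (f ∘ ζ)) = (g * deriv (g * deriv f)) ∘ ζ := by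
  have hgf : ContDiff 𝕜 1 (g * deriv f) := contDiff_mul_deriv hg hf
  rw [deriv_comp_of_hasDerivAt_comp hζ (hf.differentiable (by norm_num)),
    deriv_comp_of_hasDerivAt_comp hζ (hgf.differentiable (by norm_num))]

theorem deriv_deriv_deriv_comp_of_hasDerivAt_comp (hζ : ∀ x, HasDerivAt ζ (g (ζ x)) x)
    (hg : ContDiff 𝕜 2 g) (hf : ContDiff 𝕜 3 f) :
    deriv (deriv (deriv (f ∘ ζ))) =
      (g * (deriv g * deriv (g * deriv f) + g * deriv (deriv (g * deriv f)))) ∘ ζ := by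
  have hg₁ : Differentiable 𝕜 g := hg.differentiable (by norm_num)
  have hgf : ContDiff 𝕜 2 (g * deriv f) := contDiff_mul_deriv hg hf
  have hgf' : Differentiable 𝕜 (deriv (g * deriv f)) := hgf.differentiable_deriv_two
  rw [deriv_deriv_comp_of_hasDerivAt_comp hζ (hg.of_le (by norm_num)) (hf.of_le (by norm_num)),
    deriv_comp_of_hasDerivAt_comp hζ (hg₁.mul hgf')]
  congr 2
  ext a
  exact deriv_mul (hg₁ a) (hgf' a)

theorem deriv_pow_three_mul_deriv_deriv_sub_self (hg : ContDiff 𝕜 3 g) (a : 𝕜) :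
    deriv (fun a => g a ^ 3 * (deriv (deriv g) a - g a)) a =
      g a ^ 2 * deriv (deriv (g * deriv g)) a - 4 * g a ^ 3 * deriv g a := by
  have hg' : ContDiff 𝕜 2 (deriv g) := ContDiff.deriv' (n := 2) hg
  have h₀ (a : 𝕜) : HasDerivAt g (deriv g a) a :=
    (hg.differentiable (by norm_num) a).hasDerivAt
  have h₁ (a : 𝕜) : HasDerivAt (deriv g) (deriv (deriv g) a) a :=
    (hg'.differentiable (by norm_num) a).hasDerivAt
  have h₂ : HasDerivAt (deriv (deriv g)) (deriv (deriv (deriv g)) a) a :=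
    (hg'.differentiable_deriv_two a).hasDerivAt
  have hp : deriv (g * deriv g) = deriv g * deriv g + g * deriv (deriv g) :=
    funext fun a => ((h₀ a).mul (h₁ a)).deriv
  have hp' : deriv (deriv g * deriv g + g * deriv (deriv g)) a =
      deriv (deriv g) a * deriv g a + deriv g a * deriv (deriv g) a +
        (deriv g a * deriv (deriv g) a + g a * deriv (deriv (deriv g)) a) :=
    (((h₁ a).mul (h₁ a)).add ((h₀ a).mul h₂)).deriv
  have hflux : deriv (fun a => g a ^ 3 * (deriv (deriv g) a - g a)) a =
      3 * g a ^ 2 * deriv g a * (deriv (deriv g) a - g a) +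
        g a ^ 3 * (deriv (deriv (deriv g)) a - deriv g a) :=
    (((h₀ a).fun_pow 3).fun_mul (h₂.fun_sub (h₀ a))).deriv
  rw [hp, hp', hflux]
  ring

end OneVariable

section TwoVariable

variable {f : ℝ → ℝ → ℝ} {a b : ℝ}

theorem hasDerivAt_fderiv_fst (hf : DifferentiableAt ℝ (uncurry f) (a, b)) :
    HasDerivAt (fun s => f s b) (fderiv ℝ (uncurry f) (a, b) (1, 0)) a :=
  HasFDerivAt.comp_hasDerivAt (f := fun s => (s, b)) a hf.hasFDerivAt
    ((hasDerivAt_id a).prodMk (hasDerivAt_const a b))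

theorem hasDerivAt_fderiv_snd (hf : DifferentiableAt ℝ (uncurry f) (a, b)) :
    HasDerivAt (f a) (fderiv ℝ (uncurry f) (a, b) (0, 1)) b :=
  HasFDerivAt.comp_hasDerivAt (f := fun s => (a, s)) b hf.hasFDerivAt
    ((hasDerivAt_const b a).prodMk (hasDerivAt_id b))

theorem hasDerivAt_d1 (hf : DifferentiableAt ℝ (uncurry f) (a, b)) :
    HasDerivAt (fun s => f s b) (d1 f a b) a :=
  (hasDerivAt_fderiv_fst hf).differentiableAt.hasDerivAt

theorem hasDerivAt_d2 (hf : DifferentiableAt ℝ (uncurry f) (a, b)) :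
    HasDerivAt (f a) (d2 f a b) b :=
  (hasDerivAt_fderiv_snd hf).differentiableAt.hasDerivAt

theorem fderiv_uncurry_apply (hf : DifferentiableAt ℝ (uncurry f) (a, b)) (v w : ℝ) :
    fderiv ℝ (uncurry f) (a, b) (v, w) = d1 f a b * v + d2 f a b * w := by
  have hsplit : (v, w) = v • ((1 : ℝ), (0 : ℝ)) + w • ((0 : ℝ), (1 : ℝ)) := by simp
  rw [hsplit, map_add, map_smul, map_smul, smul_eq_mul, smul_eq_mul, mul_comm v, mul_comm w,
    (hasDerivAt_d1 hf).unique (hasDerivAt_fderiv_fst hf),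
    (hasDerivAt_d2 hf).unique (hasDerivAt_fderiv_snd hf)]

theorem hasDerivAt_comp_uncurry {ξ η : ℝ → ℝ} {ξ' η' s : ℝ}
    (hf : DifferentiableAt ℝ (uncurry f) (ξ s, η s))
    (hξ : HasDerivAt ξ ξ' s) (hη : HasDerivAt η η' s) :
    HasDerivAt (fun s => f (ξ s) (η s))
      (d1 f (ξ s) (η s) * ξ' + d2 f (ξ s) (η s) * η') s := by
  rw [← fderiv_uncurry_apply hf]
  exact HasFDerivAt.comp_hasDerivAt (f := fun s => (ξ s, η s)) s hf.hasFDerivAt (hξ.prodMk hη)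

end TwoVariable

theorem reciprocal_mKdV_to_RmKdV_general (u z U : ℝ → ℝ → ℝ)
    (hz : Differentiable ℝ (uncurry z)) (hU : ContDiff ℝ 3 (uncurry U))
    (hzx : ∀ x t, d1 z x t = u x t)
    (hzt : ∀ x t, d2 z x t = 2 * u x t ^ 3 - d1 (d1 u) x t)
    (hUu : ∀ x t, U (z x t) t = u x t) (x t : ℝ) :
    d2 U (z x t) t + d1 (fun a b => U a b ^ 3 * (d1 (d1 U) a b - U a b)) (z x t) t =
      d2 u x t + d1 (d1 (d1 u)) x t - 6 * u x t ^ 2 * d1 u x t := by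
  have hu : u = fun x t => U (z x t) t := by ext x t; exact (hUu x t).symm
  let g : ℝ → ℝ := fun a => U a t
  let ζ : ℝ → ℝ := fun s => z s t
  let p : ℝ → ℝ := deriv (g * deriv g)
  have hg : ContDiff ℝ 3 g := hU.comp (contDiff_id.prodMk contDiff_const)
  have hg₂ : ContDiff ℝ 2 g := hg.of_le (by norm_num)
  have hζ (s : ℝ) : HasDerivAt ζ (g (ζ s)) s :=
    (hasDerivAt_d1 (hz (s, t))).congr_deriv ((hzx s t).trans (hUu s t).symm)
  have hux : d1 u x t = g (ζ x) * deriv g (ζ x) := by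
    rw [hu]
    exact congrFun (deriv_comp_of_hasDerivAt_comp hζ (hg.differentiable (by norm_num))) x
  have huxx : d1 (d1 u) x t = g (ζ x) * p (ζ x) := by
    rw [hu]
    exact congrFun (deriv_deriv_comp_of_hasDerivAt_comp hζ (hg₂.of_le (by norm_num)) hg₂) x
  have huxxx : d1 (d1 (d1 u)) x t =
      g (ζ x) * (deriv g (ζ x) * p (ζ x) + g (ζ x) * deriv p (ζ x)) := by
    rw [hu]
    exact congrFun (deriv_deriv_deriv_comp_of_hasDerivAt_comp hζ hg₂ hg) x
  have hut : d2 u x t =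
      deriv g (ζ x) * (2 * u x t ^ 3 - d1 (d1 u) x t) + d2 U (z x t) t * 1 := by
    rw [← hzt]
    conv_lhs => rw [hu]
    exact (hasDerivAt_comp_uncurry (hU.differentiable (by norm_num) _)
      (hasDerivAt_d2 (hz (x, t))) (hasDerivAt_id t)).deriv
  have hflux : d1 (fun a b => U a b ^ 3 * (d1 (d1 U) a b - U a b)) (z x t) t =
      g (ζ x) ^ 2 * deriv p (ζ x) - 4 * g (ζ x) ^ 3 * deriv g (ζ x) :=
    deriv_pow_three_mul_deriv_deriv_sub_self hg (ζ x)
  have hug : u x t = g (ζ x) := (hUu x t).symm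
  rw [hflux, hut, huxxx, huxx, hux, hug]
  ring

/-- the reciprocal transformation `dz = u·dx + (2u³ − u_xx)dt`, `τ = t`
turns a nowhere-vanishing solution `u` of mKdV into a solution `U` of RmKdV. -/
theorem reciprocal_mKdV_to_RmKdV (u z U : ℝ → ℝ → ℝ)
    (hu : Smooth2 u) (hz : Smooth2 z) (hU : Smooth2 U)
    (hne : ∀ x t, u x t ≠ 0)
    (hmKdV : ∀ x t, d2 u x t + d1 (d1 (d1 u)) x t - 6 * (u x t) ^ 2 * d1 u x t = 0)
    (hzx : ∀ x t, d1 z x t = u x t)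
    (hzt : ∀ x t, d2 z x t = 2 * (u x t) ^ 3 - d1 (d1 u) x t)
    (hUu : ∀ x t, U (z x t) t = u x t) :
    ∀ x t,
      d2 U (z x t) t
        + d1 (fun a b => (U a b) ^ 3 * (d1 (d1 U) a b - U a b)) (z x t) t = 0 := by
  have hz₁ : Differentiable ℝ (uncurry z) := ContDiff.differentiable hz (by simp)
  exact fun x t => (reciprocal_mKdV_to_RmKdV_general u z U hz₁ (contDiff_infty.1 hU 3)
    hzx hzt hUu x t).trans (hmKdV x t)
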